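/- Let N ≥ 1, let q be a complex number with 0 < |q| < 1, let F(X) := ∏_{j=1}^N E_q(X_j) on the open polydisc {X ∈ ℂ^N : |X_j| < 1 for all j}, and let μ : {1,…,N} → ℕ. Apply to F, sequentially for j = 1, …, N, the chain of operators f ↦ (X ↦ f(X) − q^{−r}·f(X with j-th coordinate replaced by q·X_j)) for r = 0, 1, …, μ(j)−1. Then the resulting function equals X ↦ (∏_{j=1}^N X_j^{μ(j)})·F(X) on the polydisc. (This is the multivariable operator identity ∏_j ∏_{r=0}^{μ_j−1}(1 − q^{−r} q^{X_j ∂_{X_j}}) I^K_{pt} = (∏_j X_j^{μ_j}) I^K_{pt} used in the proof of Theorem 2.) -/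

import Mathlib

/-! The series identity `E_q(qx) = (1 - x) E_q(x)` for `|x| < 1` drives everything: subtracting the
exponents termwise leaves `∑ x^k / k = -log (1 - x)` (`qExp_q_mul`). Hence any `f` with
`f(…, q X_j, …) = (1 - X_j) f(X)` satisfies
`X_j^r f(X) - q^{-r} (q X_j)^r (1 - X_j) f(X) = X_j^{r+1} f(X)`, so a chain of length `μ_j` in the
`j`-th variable multiplies `f` by `X_j^{μ_j}` (`qDiffChain_apply`). Multiplication by a power of
`X_j` does not affect the functional equations in the other variables, so the chains can be
applied one after another (`foldl_qDiffChain_apply`).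
-/

/-- The q-exponential `E_q(x) = exp(∑_{k≥1} x^k/(k(1-q^k)))`, defined for `|x| < 1`. -/
noncomputable def qExp (q x : ℂ) : ℂ :=
  Complex.exp (∑' k : ℕ, x ^ (k + 1) / ((k + 1 : ℂ) * (1 - q ^ (k + 1))))

/-- The q-difference operator `1 − q^{−r} q^{X_j ∂_{X_j}}` acting on functions
of `N` complex variables. -/
noncomputable def qDiffOp (N : ℕ) (q : ℂ) (j : Fin N) (r : ℕ)
    (f : (Fin N → ℂ) → ℂ) : (Fin N → ℂ) → ℂ :=
  fun X => f X - q ^ (-(r : ℤ)) * f (Function.update X j (q * X j))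

/-- The chain `∏_{r=0}^{μ−1}(1 − q^{−r} q^{X_j ∂_{X_j}})` in the `j`-th variable. -/
noncomputable def qDiffChain (N : ℕ) (q : ℂ) (j : Fin N) :
    ℕ → ((Fin N → ℂ) → ℂ) → ((Fin N → ℂ) → ℂ)
  | 0, f => f
  | r + 1, f => qDiffOp N q j r (qDiffChain N q j r f)

/-- Sequential application, for `j = 1, …, N`, of the chains
`∏_{r=0}^{μ(j)−1}(1 − q^{−r} q^{X_j ∂_{X_j}})`. -/
noncomputable def qDiffChainAll (N : ℕ) (q : ℂ) (μ : Fin N → ℕ)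
    (f : (Fin N → ℂ) → ℂ) : (Fin N → ℂ) → ℂ :=
  (List.finRange N).foldl (fun g j => qDiffChain N q j (μ j) g) f

theorem summable_qExp {q x : ℂ} (hq : ‖q‖ < 1) (hx : ‖x‖ < 1) :
    Summable fun k : ℕ => x ^ (k + 1) / ((k + 1 : ℂ) * (1 - q ^ (k + 1))) := by
  have hg : Summable fun k : ℕ => ‖x‖ ^ k / (1 - ‖q‖) :=
    (summable_geometric_of_lt_one (norm_nonneg x) hx).div_const _
  refine Summable.of_norm_bounded hg fun k => ?_
  have h1 : 1 - ‖q‖ ≤ ‖1 - q ^ (k + 1)‖ := by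
    have h2 : ‖q ^ (k + 1)‖ ≤ ‖q‖ := by
      rw [norm_pow]
      exact pow_le_of_le_one (norm_nonneg q) hq.le (Nat.succ_ne_zero k)
    have h3 := norm_sub_norm_le (1 : ℂ) (q ^ (k + 1))
    rw [norm_one] at h3
    linarith
  have h4 : ‖(k + 1 : ℂ)‖ = k + 1 := by
    exact_mod_cast Complex.norm_natCast (k + 1)
  have h5 : (0 : ℝ) ≤ k := Nat.cast_nonneg k
  rw [norm_div, norm_mul, norm_pow, h4]
  refine div_le_div₀ (by positivity) (pow_le_pow_of_le_one (norm_nonneg x) hx.le (Nat.le_succ k))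
    (by linarith) ?_
  nlinarith [norm_nonneg (1 - q ^ (k + 1))]

theorem qExp_q_mul {q x : ℂ} (hq : ‖q‖ < 1) (hx : ‖x‖ < 1) :
    qExp q (q * x) = (1 - x) * qExp q x := by
  have hqx : ‖q * x‖ < 1 := by
    rw [norm_mul]
    exact mul_lt_one_of_nonneg_of_lt_one_left (norm_nonneg q) hq hx.le
  have hlog : HasSum (fun k : ℕ => x ^ (k + 1) / (k + 1 : ℂ)) (-Complex.log (1 - x)) := by
    have h := (hasSum_nat_add_iff' 1).2 (Complex.hasSum_taylorSeries_neg_log hx)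
    simpa using h
  have hsub := (summable_qExp hq hx).hasSum.sub hlog
  have hne : (1 - x) ≠ 0 := by
    intro h
    rw [← sub_eq_zero.1 h, norm_one] at hx
    exact lt_irrefl _ hx
  have hterm : (fun k : ℕ => (q * x) ^ (k + 1) / ((k + 1 : ℂ) * (1 - q ^ (k + 1)))) =
      fun k : ℕ => x ^ (k + 1) / ((k + 1 : ℂ) * (1 - q ^ (k + 1))) - x ^ (k + 1) / (k + 1 : ℂ) := by
    funext k
    have hk : (k + 1 : ℂ) ≠ 0 := Nat.cast_add_one_ne_zero k
    have hd : 1 - q ^ (k + 1) ≠ 0 := by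
      intro h
      have h1 : ‖q ^ (k + 1)‖ < 1 := by
        rw [norm_pow]
        exact pow_lt_one₀ (norm_nonneg q) hq (Nat.succ_ne_zero k)
      rw [← sub_eq_zero.1 h, norm_one] at h1
      exact lt_irrefl _ h1
    rw [mul_pow]
    field_simp
    ring
  unfold qExp
  rw [hterm, hsub.tsum_eq, sub_neg_eq_add, Complex.exp_add, Complex.exp_log hne, mul_comm]

theorem norm_update_q_mul_lt_one {N : ℕ} {q : ℂ} (hq : ‖q‖ < 1) (j : Fin N) {X : Fin N → ℂ}
    (hX : ∀ i, ‖X i‖ < 1) (i : Fin N) : ‖Function.update X j (q * X j) i‖ < 1 := by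
  by_cases h : i = j
  · subst h
    rw [Function.update_self, norm_mul]
    exact mul_lt_one_of_nonneg_of_lt_one_left (norm_nonneg q) hq (hX i).le
  · rw [Function.update_of_ne h]
    exact hX i

/-- The functional equation `f(…, q X_j, …) = (1 - X_j) f(X)` on the open unit polydisc. -/
def IsQExpIn {N : ℕ} (q : ℂ) (j : Fin N) (f : (Fin N → ℂ) → ℂ) : Prop :=
  ∀ X : Fin N → ℂ, (∀ i, ‖X i‖ < 1) →
    f (Function.update X j (q * X j)) = (1 - X j) * f X

theorem qDiffChain_apply {N : ℕ} {q : ℂ} (hq0 : q ≠ 0) (hq : ‖q‖ < 1) {j : Fin N}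
    {f : (Fin N → ℂ) → ℂ} (hf : IsQExpIn q j f) (r : ℕ) (X : Fin N → ℂ)
    (hX : ∀ i, ‖X i‖ < 1) : qDiffChain N q j r f X = X j ^ r * f X := by
  induction r generalizing X with
  | zero => simp [qDiffChain]
  | succ r ih =>
    rw [qDiffChain, qDiffOp, ih X hX, ih _ (norm_update_q_mul_lt_one hq j hX), hf X hX,
      Function.update_self, mul_pow, zpow_neg, zpow_natCast]
    have h : q ^ r ≠ 0 := pow_ne_zero r hq0
    field_simp
    ring

theorem IsQExpIn.chain_of_ne {N : ℕ} {q : ℂ} (hq0 : q ≠ 0) (hq : ‖q‖ < 1) {i j : Fin N}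
    (hij : i ≠ j) {f : (Fin N → ℂ) → ℂ} (hi : IsQExpIn q i f) (hj : IsQExpIn q j f) (r : ℕ) :
    IsQExpIn q i (qDiffChain N q j r f) := by
  intro X hX
  rw [qDiffChain_apply hq0 hq hj r X hX,
    qDiffChain_apply hq0 hq hj r _ (norm_update_q_mul_lt_one hq i hX), hi X hX,
    Function.update_of_ne hij.symm]
  ring

/-- The list must be duplicate-free: after a chain in the variable `j`, the functional equation
in `j` itself no longer holds. -/
theorem foldl_qDiffChain_apply {N : ℕ} {q : ℂ} (hq0 : q ≠ 0) (hq : ‖q‖ < 1) (μ : Fin N → ℕ)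
    (X : Fin N → ℂ) (hX : ∀ i, ‖X i‖ < 1) (l : List (Fin N)) (hl : l.Nodup)
    (f : (Fin N → ℂ) → ℂ) (hf : ∀ j ∈ l, IsQExpIn q j f) :
    l.foldl (fun g j => qDiffChain N q j (μ j) g) f X = (l.map fun j => X j ^ μ j).prod * f X := by
  induction l generalizing f with
  | nil => simp
  | cons j l ih =>
    obtain ⟨hjl, hl⟩ := List.nodup_cons.1 hl
    have hj : IsQExpIn q j f := hf j List.mem_cons_self
    rw [List.foldl_cons, ih hl _ fun i hi =>
        (hf i (List.mem_cons_of_mem j hi)).chain_of_ne hq0 hq (ne_of_mem_of_not_mem hi hjl) hj _,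
      qDiffChain_apply hq0 hq hj _ X hX, List.map_cons, List.prod_cons]
    ring

theorem isQExpIn_prod_qExp {N : ℕ} {q : ℂ} (hq : ‖q‖ < 1) (j : Fin N) :
    IsQExpIn q j fun Y : Fin N → ℂ => ∏ i, qExp q (Y i) := by
  intro X hX
  have hrest : ∏ i ∈ Finset.univ.erase j, qExp q (Function.update X j (q * X j) i) =
      ∏ i ∈ Finset.univ.erase j, qExp q (X i) :=
    Finset.prod_congr rfl fun i hi => by rw [Function.update_of_ne (Finset.ne_of_mem_erase hi)]
  simp only
  rw [← Finset.mul_prod_erase _ _ (Finset.mem_univ j), hrest, Function.update_self,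
    qExp_q_mul hq (hX j), mul_assoc,
    Finset.mul_prod_erase Finset.univ (fun i => qExp q (X i)) (Finset.mem_univ j)]

/-- The multivariable operator identity
`∏_j ∏_{r=0}^{μ_j−1}(1 − q^{−r} q^{X_j ∂_{X_j}}) I^K_{pt} = (∏_j X_j^{μ_j}) I^K_{pt}`
used in the proof of Theorem 2, where `I^K_{pt}(X) = ∏_j E_q(X_j)`. -/
theorem qDiffChainAll_qExp (N : ℕ) (hN : 1 ≤ N) (q : ℂ) (hq0 : 0 < ‖q‖) (hq : ‖q‖ < 1)
    (μ : Fin N → ℕ) (X : Fin N → ℂ) (hX : ∀ j, ‖X j‖ < 1) :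
    qDiffChainAll N q μ (fun Y => ∏ j, qExp q (Y j)) X =
      (∏ j, X j ^ μ j) * ∏ j, qExp q (X j) := by
  rw [qDiffChainAll, foldl_qDiffChain_apply (norm_pos_iff.1 hq0) hq μ X hX _
    (List.nodup_finRange N) _ fun j _ => isQExpIn_prod_qExp hq j,
    Fin.prod_univ_def fun j => X j ^ μ j]
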